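/- Let δ ≥ e be a real number. Then for every z ∈ [1/δ, 1], δ·e^z − e·(δ+1)·z + e·ln z + e ≥ 0. -/

import Mathlib

/-!
Put `w = z - 1 - log z`, which is nonnegative. Since `exp z = exp 1 * z * exp w`, the left-hand side
equals `exp 1 * (δ * z * (exp w - 1) - w)`, and `exp w - 1 ≥ w` bounds it below by
`exp 1 * (δ * z - 1) * w`.
-/

theorem mul_sub_log_le_exp_sub_one {z : ℝ} (hz : 0 < z) :
    z * (z - Real.log z) ≤ Real.exp (z - 1) :=
  calc
    z * (z - Real.log z) = z * ((z - 1 - Real.log z) + 1) := by ring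
    _ ≤ z * Real.exp (z - 1 - Real.log z) := by
      gcongr
      exact Real.add_one_le_exp _
    _ = Real.exp (z - 1) := by
      rw [Real.exp_sub (z - 1), Real.exp_log hz, mul_div_cancel₀ _ hz.ne']

theorem rand_rob4_2_substituted_general (δ : ℝ) (hδ : 0 < δ) :
    ∀ z ∈ Set.Ici (1 / δ),
      δ * Real.exp z - Real.exp 1 * (δ + 1) * z + Real.exp 1 * Real.log z + Real.exp 1 ≥ 0 := by
  intro z (hz : 1 / δ ≤ z)
  have z_pos : 0 < z := (one_div_pos.2 hδ).trans_le hz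
  have one_le_mul : 1 ≤ δ * z := (div_le_iff₀' hδ).1 hz
  have log_gap_nonneg : 0 ≤ z - 1 - Real.log z := sub_nonneg.2 (Real.log_le_sub_one_of_pos z_pos)
  calc
    δ * Real.exp z - Real.exp 1 * (δ + 1) * z + Real.exp 1 * Real.log z + Real.exp 1
    _ = Real.exp 1 * (δ * Real.exp (z - 1) - (δ + 1) * z + Real.log z + 1) := by
      rw [Real.exp_sub]
      field_simp
    _ ≥ Real.exp 1 * (δ * (z * (z - Real.log z)) - (δ + 1) * z + Real.log z + 1) := by
      gcongr
      exact mul_sub_log_le_exp_sub_one z_pos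
    _ = Real.exp 1 * ((δ * z - 1) * (z - 1 - Real.log z)) := by ring
    _ ≥ 0 := mul_nonneg (Real.exp_pos 1).le (mul_nonneg (sub_nonneg.2 one_le_mul) log_gap_nonneg)

theorem rand_rob4_2_substituted (δ : ℝ) (hδ : Real.exp 1 ≤ δ) :
    ∀ z ∈ Set.Icc (1 / δ) 1,
      δ * Real.exp z - Real.exp 1 * (δ + 1) * z + Real.exp 1 * Real.log z + Real.exp 1 ≥ 0 :=
  fun z hz => rand_rob4_2_substituted_general δ ((Real.exp_pos 1).trans_le hδ) z hz.1
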